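/- Let (b_n)_{n≥0} be a sequence of nonnegative real numbers such that the power series f(x) = Σ_{n=0}^∞ b_n x^n converges for |x| < 1, and let β ≥ 0. If limsup_{n→∞} (log b_n)/√n ≤ 2√β, then limsup_{x→1⁻} (1−x) log f(x) ≤ β. -/

import Mathlib

/-!
Write `s = 1 - x`. If `b n ≤ exp (2 c √n)` for `n ≥ N`, then, since `x ^ n ≤ exp (-n s)` and
`2 c √n ≤ c² / ((1 - δ) s) + (1 - δ) s n` (AM-GM), the power series is at most
`exp (c² / ((1 - δ) s)) * (A + 1 + 1 / (δ s))` with `A = ∑_{n < N} b n`. Hence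
`s * log f(x) ≤ c² / (1 - δ) + o(1)`; taking `c = √β + δ` and `δ → 0` gives the bound `β`.

Both upper limits are those of the conditionally complete order on `ℝ`, where an infinite upper
limit takes the value `0`. If `s * log f(x)` is unbounded above near `1`, its upper limit is `0 ≤ β`.
If it is bounded above, the estimate `b n * x ^ n ≤ f(x)` at `x = 1 - 1 / √n` shows that
`log (b n) / √n` is bounded above (`bdd_of_bdd`), so the hypothesis on the upper limit really
yields the eventual bounds `b n ≤ exp (2 c √n)` used above.
-/

open Filter Asymptotics Real

/-- The eventual bounds `g ≤ β + ε` suffice even when `g` tends to `-∞`: the upper limit is then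
`0` by convention, which is at most `β`. -/
lemma limsup_le_of_forall_eps {α : Type*} {l : Filter α} {g : α → ℝ} {β : ℝ} (hβ : 0 ≤ β)
    (h : ∀ ε > 0, ∀ᶠ x in l, g x ≤ β + ε) : limsup g l ≤ β := by
  rw [limsup_eq]
  by_cases hb : BddBelow {a | ∀ᶠ n in l, g n ≤ a}
  · exact le_of_forall_pos_le_add fun ε hε => csInf_le hb (h ε hε)
  · rw [Real.sInf_of_not_bddBelow hb]
    exact hβ

/-- If `(1 - x) log f(x)` is bounded above as `x → 1⁻`, then `log (b n) / √n` is bounded above. -/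
lemma bdd_of_bdd (b : ℕ → ℝ) (hb : ∀ n, 0 ≤ b n)
    (hconv : ∀ x : ℝ, |x| < 1 → Summable fun n => b n * x ^ n)
    (h : IsBoundedUnder (· ≤ ·) (nhdsWithin 1 (Set.Iio 1))
      (fun x : ℝ => (1 - x) * Real.log (∑' n, b n * x ^ n))) :
    IsBoundedUnder (· ≤ ·) atTop (fun n : ℕ => Real.log (b n) / Real.sqrt n) := by
  obtain ⟨C, hC⟩ := h
  rw [eventually_map] at hC
  have hsq : Tendsto (fun n : ℕ => Real.sqrt n) atTop atTop :=
    Real.tendsto_sqrt_atTop.comp tendsto_natCast_atTop_atTop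
  have ht : Tendsto (fun n : ℕ => 1 - (Real.sqrt n)⁻¹) atTop (nhdsWithin 1 (Set.Iio 1)) := by
    refine tendsto_nhdsWithin_iff.2 ⟨?_, ?_⟩
    · simpa using (tendsto_inv_atTop_zero.comp hsq).const_sub 1
    · filter_upwards [hsq.eventually_gt_atTop 0] with n hn
      have := inv_pos.2 hn
      simp only [Set.mem_Iio]
      linarith
  refine ⟨max (C + 2) 0, ?_⟩
  rw [eventually_map]
  filter_upwards [ht.eventually hC, hsq.eventually_ge_atTop 2] with n hn h2
  set r := Real.sqrt n with hr
  have hr0 : 0 < r := by linarith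
  rcases (hb n).eq_or_lt with h0 | hpos
  · simp [← h0]
  refine le_max_of_le_left ?_
  have hinv : r⁻¹ ≤ 1 / 2 := by
    rw [inv_le_comm₀ hr0 (by norm_num)]
    norm_num
    exact h2
  have hinv0 : 0 < r⁻¹ := inv_pos.2 hr0
  set x := 1 - r⁻¹ with hx
  have hx0 : 1 / 2 ≤ x := by linarith
  have hxp : 0 < x := by linarith
  have hle : b n * x ^ n ≤ ∑' m, b m * x ^ m :=
    (hconv x (by rw [abs_of_pos hxp]; linarith)).le_tsum n
      (fun m _ => mul_nonneg (hb m) (pow_nonneg hxp.le m))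
  have hlog := Real.log_le_log (by positivity) hle
  rw [Real.log_mul hpos.ne' (by positivity), Real.log_pow] at hlog
  have hlx : -(2 * r⁻¹) ≤ Real.log x := by
    have h1 := Real.one_sub_inv_le_log_of_pos hxp
    have h3 : x⁻¹ ≤ 1 + 2 * r⁻¹ := by
      rw [inv_le_iff_one_le_mul₀ hxp, hx]
      nlinarith
    linarith
  have hnr : (n : ℝ) = r * r := by rw [hr, Real.mul_self_sqrt (Nat.cast_nonneg n)]
  have hn' : Real.log (∑' m, b m * x ^ m) ≤ C * r := by
    have : 1 - x = r⁻¹ := by rw [hx]; ring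
    rw [this, inv_mul_le_iff₀ hr0] at hn
    linarith
  rw [div_le_iff₀ hr0]
  have h5 : (n : ℝ) * -(2 * r⁻¹) ≤ n * Real.log x := by gcongr
  have h6 : (n : ℝ) * -(2 * r⁻¹) = - (2 * r) := by
    rw [hnr]; field_simp
  linarith

/-- The quantitative form of the estimate: an explicit bound for the power series at `x`. -/
lemma tsum_bound (b : ℕ → ℝ) (hb : ∀ n, 0 ≤ b n) (c δ : ℝ) (hδ : 0 < δ) (hδ1 : δ < 1)
    (N : ℕ) (hN : ∀ n ≥ N, b n ≤ Real.exp (2 * c * Real.sqrt n))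
    (x : ℝ) (hx0 : 0 < x) (hx1 : x < 1) (hs : Summable fun n => b n * x ^ n) :
    ∑' n, b n * x ^ n ≤ Real.exp (c ^ 2 / (1 - δ) / (1 - x)) *
      ((∑ n ∈ Finset.range N, b n) + 1 + 1 / (δ * (1 - x))) := by
  set s := 1 - x with hsd
  have hs0 : 0 < s := by linarith
  have hd : 0 < 1 - δ := by linarith
  set E := Real.exp (c ^ 2 / (1 - δ) / s) with hE
  have hE1 : 1 ≤ E := Real.one_le_exp (by positivity)
  set q := Real.exp (-(δ * s)) with hq
  have hq1 : q < 1 := by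
    rw [hq, Real.exp_lt_one_iff]
    have := mul_pos hδ hs0
    linarith
  have hgeo : Summable fun n : ℕ => q ^ n := summable_geometric_of_lt_one (Real.exp_nonneg _) hq1
  have htail : ∀ n, b (n + N) * x ^ (n + N) ≤ E * q ^ n := by
    intro n
    set m := n + N with hm
    have hxe : x ≤ Real.exp (-s) := by
      have := Real.add_one_le_exp (-s)
      linarith
    have hpow : x ^ m ≤ Real.exp (-(m * s)) := by
      calc x ^ m ≤ (Real.exp (-s)) ^ m := by gcongr
        _ = _ := by rw [← Real.exp_nat_mul]; ring_nf
    have hamgm : 2 * c * Real.sqrt m ≤ c ^ 2 / (1 - δ) / s + (1 - δ) * s * m := by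
      have hm2 : Real.sqrt m ^ 2 = m := Real.sq_sqrt (Nat.cast_nonneg m)
      generalize Real.sqrt m = r at hm2 ⊢
      have hk : 0 < (1 - δ) * s := by positivity
      rw [div_div]
      have hid : c ^ 2 / ((1 - δ) * s) + (1 - δ) * s * m - 2 * c * r =
          (c - (1 - δ) * s * r) ^ 2 / ((1 - δ) * s) := by
        rw [← hm2]
        field_simp
        ring
      have : 0 ≤ (c - (1 - δ) * s * r) ^ 2 / ((1 - δ) * s) := by positivity
      linarith
    calc b m * x ^ m ≤ Real.exp (2 * c * Real.sqrt m) * Real.exp (-(m * s)) := by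
          gcongr
          exact hN m (by omega)
      _ = Real.exp (2 * c * Real.sqrt m - m * s) := by rw [← Real.exp_add]; ring_nf
      _ ≤ Real.exp (c ^ 2 / (1 - δ) / s + m * (-(δ * s))) := by
          apply Real.exp_le_exp.2
          linarith
      _ = E * q ^ m := by rw [Real.exp_add, Real.exp_nat_mul]
      _ ≤ E * q ^ n := by
          have : q ^ m ≤ q ^ n := pow_le_pow_of_le_one (Real.exp_nonneg _) hq1.le (by omega)
          gcongr
  have hsum_tail : ∑' n, b (n + N) * x ^ (n + N) ≤ E * (1 + 1 / (δ * s)) := by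
    calc _ ≤ ∑' n, E * q ^ n :=
          ((summable_nat_add_iff N).2 hs).tsum_le_tsum htail (hgeo.mul_left E)
      _ = E * (1 - q)⁻¹ := by rw [tsum_mul_left, tsum_geometric_of_lt_one (Real.exp_nonneg _) hq1]
      _ ≤ _ := by
          have hu : 0 < δ * s := mul_pos hδ hs0
          gcongr
          rw [inv_le_iff_one_le_mul₀ (by linarith)]
          -- `exp (-u) ≤ 1 / (1 + u)`, so `1 / (1 - exp (-u)) ≤ 1 + 1 / u`.
          have h1 : q ≤ (1 + δ * s)⁻¹ := by
            rw [hq, Real.exp_neg]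
            have := Real.add_one_le_exp (δ * s)
            gcongr
            linarith
          have h2 : (1 + 1 / (δ * s)) * (1 - (1 + δ * s)⁻¹) = 1 := by
            field_simp
            ring
          calc (1 : ℝ) = _ := h2.symm
            _ ≤ _ := by gcongr
  have hhead : ∑ n ∈ Finset.range N, b n * x ^ n ≤ E * ∑ n ∈ Finset.range N, b n := by
    calc _ ≤ ∑ n ∈ Finset.range N, b n := by
          apply Finset.sum_le_sum
          intro n _
          exact mul_le_of_le_one_right (hb n) (pow_le_one₀ hx0.le hx1.le)
      _ ≤ _ := le_mul_of_one_le_left (Finset.sum_nonneg fun n _ => hb n) hE1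
  rw [← hs.sum_add_tsum_nat_add N]
  linarith

theorem abelian_limsup (b : ℕ → ℝ) (hb : ∀ n, 0 ≤ b n)
    (hconv : ∀ x : ℝ, |x| < 1 → Summable fun n => b n * x ^ n)
    (β : ℝ) (hβ : 0 ≤ β)
    (hlimsup : limsup (fun n : ℕ => Real.log (b n) / Real.sqrt n) atTop ≤
      2 * Real.sqrt β) :
    limsup (fun x : ℝ => (1 - x) * Real.log (∑' n, b n * x ^ n))
        (nhdsWithin 1 (Set.Iio 1)) ≤ β := by
  by_cases hbd : IsBoundedUnder (· ≤ ·) (nhdsWithin 1 (Set.Iio 1))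
      (fun x : ℝ => (1 - x) * Real.log (∑' n, b n * x ^ n))
  swap
  · -- The upper limit is the infimum of the empty set, which is `0`.
    rw [limsup_eq]
    have : {a | ∀ᶠ x : ℝ in nhdsWithin 1 (Set.Iio 1),
        (1 - x) * Real.log (∑' n, b n * x ^ n) ≤ a} = ∅ := by
      ext a
      simp only [Set.mem_ofPred_eq, Set.mem_empty_iff_false, iff_false]
      exact fun ha => hbd ⟨a, eventually_map.2 ha⟩
    rw [this, Real.sInf_empty]
    exact hβ
  have hbd' := bdd_of_bdd b hb hconv hbd
  refine limsup_le_of_forall_eps hβ fun ε hε => ?_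
  obtain ⟨δ, hδε, hδ0, hδ1⟩ : ∃ δ : ℝ, (Real.sqrt β + δ) ^ 2 / (1 - δ) < β + ε / 2 ∧
      0 < δ ∧ δ < 1 := by
    have hcont : ContinuousAt (fun δ : ℝ => (Real.sqrt β + δ) ^ 2 / (1 - δ)) 0 := by
      apply ContinuousAt.div (by fun_prop) (by fun_prop)
      norm_num
    have h1 := hcont.eventually_lt_const (u := β + ε / 2) (by
      simp only [add_zero, sub_zero, div_one, Real.sq_sqrt hβ]
      linarith)
    have h2 : ∀ᶠ δ : ℝ in nhdsWithin 0 (Set.Ioi 0), 0 < δ ∧ δ < 1 :=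
      Ioo_mem_nhdsGT one_pos
    exact ((h1.filter_mono nhdsWithin_le_nhds).and h2).exists
  set c := Real.sqrt β + δ with hc
  have hev := eventually_lt_of_limsup_lt (b := 2 * c) (by rw [hc]; linarith) hbd'
  obtain ⟨N, hN⟩ := eventually_atTop.1 (hev.and (eventually_gt_atTop 0))
  have hN' : ∀ n ≥ N, b n ≤ Real.exp (2 * c * Real.sqrt n) := by
    intro n hn
    obtain ⟨h1, h2⟩ := hN n hn
    rcases (hb n).eq_or_lt with h0 | hpos
    · rw [← h0]
      exact Real.exp_nonneg _
    · rw [div_lt_iff₀ (Real.sqrt_pos.2 (Nat.cast_pos.2 h2))] at h1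
      exact (Real.log_le_iff_le_exp hpos).1 h1.le
  set A := ∑ n ∈ Finset.range N, b n with hA
  have hA0 : 0 ≤ A := Finset.sum_nonneg fun n _ => hb n
  have herr : ∀ᶠ x : ℝ in nhdsWithin 1 (Set.Iio 1),
      2 * Real.sqrt ((1 - x) ^ 2 * (A + 1) + (1 - x) / δ) < ε / 2 := by
    have hcont : Continuous
        (fun x : ℝ => 2 * Real.sqrt ((1 - x) ^ 2 * (A + 1) + (1 - x) / δ)) := by fun_prop
    exact (hcont.continuousAt.eventually_lt_const (by simpa using hε)).filter_mono
      nhdsWithin_le_nhds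
  have hIoo : ∀ᶠ x : ℝ in nhdsWithin 1 (Set.Iio 1), 0 < x ∧ x < 1 :=
    Ioo_mem_nhdsLT one_pos
  filter_upwards [herr, hIoo] with x hx ⟨hx0, hx1⟩
  have hs0 : 0 < 1 - x := by linarith
  have hd : 0 < 1 - δ := by linarith
  have hbound := tsum_bound b hb c δ hδ0 hδ1 N hN' x hx0 hx1
    (hconv x (by rw [abs_of_pos hx0]; exact hx1))
  rw [← hA] at hbound
  set Y := A + 1 + 1 / (δ * (1 - x)) with hY
  have hY1 : 1 ≤ Y := by
    have : 0 < 1 / (δ * (1 - x)) := by positivity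
    linarith
  have hYpos : 0 < Y := by linarith
  have hK : 0 ≤ c ^ 2 / (1 - δ) / (1 - x) := by positivity
  have hlogY : Real.log Y ≤ 2 * Real.sqrt Y := by
    have h1 := Real.log_le_self (Real.sqrt_nonneg Y)
    rw [Real.log_sqrt hYpos.le] at h1
    linarith
  have hlog : Real.log (∑' n, b n * x ^ n) ≤ c ^ 2 / (1 - δ) / (1 - x) + 2 * Real.sqrt Y := by
    have hf0 : 0 ≤ ∑' n, b n * x ^ n :=
      tsum_nonneg fun n => mul_nonneg (hb n) (pow_nonneg hx0.le n)
    rcases hf0.eq_or_lt with h0 | hpos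
    · rw [← h0, Real.log_zero]
      positivity
    · have h1 := Real.log_le_log hpos hbound
      rw [Real.log_mul (Real.exp_ne_zero _) hYpos.ne', Real.log_exp] at h1
      linarith
  have hsqrt : (1 - x) * Real.sqrt Y = Real.sqrt ((1 - x) ^ 2 * (A + 1) + (1 - x) / δ) := by
    have : (1 - x) ^ 2 * (A + 1) + (1 - x) / δ = (1 - x) ^ 2 * Y := by
      rw [hY]
      field_simp
    rw [this, Real.sqrt_mul (sq_nonneg _), Real.sqrt_sq hs0.le]
  calc (1 - x) * Real.log (∑' n, b n * x ^ n)
      ≤ (1 - x) * (c ^ 2 / (1 - δ) / (1 - x) + 2 * Real.sqrt Y) := by gcongr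
    _ = c ^ 2 / (1 - δ) + 2 * ((1 - x) * Real.sqrt Y) := by
        field_simp
    _ ≤ β + ε := by
        rw [hsqrt]
        linarith
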